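/- Let 𝒞 be an abelian category and let 𝒜 be a full additive subcategory satisfying (C2'). Then the relative weak idempotent completion of 𝒜 in 𝒞 is deflation-closed in 𝒞: for every short exact sequence 0 → X → Y → Z → 0 in 𝒞 in which Y and Z belong to the relative weak idempotent completion of 𝒜, also X belongs to the relative weak idempotent completion of 𝒜. -/

import Mathlib

open CategoryTheory CategoryTheory.Limits ZeroObject

universe v u

variable {C : Type u} [Category.{v} C] [Abelian C]

/-- A full additive subcategory of `C`, given as a predicate on objects:
closed under isomorphisms, containing the zero object, closed under binary biproducts. -/
structure IsAdditiveClosed (𝒜 : C → Prop) : Prop where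
  iso : ∀ {X Y : C}, (X ≅ Y) → 𝒜 X → 𝒜 Y
  zero : 𝒜 0
  biprod : ∀ {X Y : C}, 𝒜 X → 𝒜 Y → 𝒜 (X ⊞ Y)

/-- `𝒜` is deflation-closed: for every short exact sequence `0 → X → Y → Z → 0`
with `Y, Z ∈ 𝒜`, also `X ∈ 𝒜`. -/
def DeflationClosed (𝒜 : C → Prop) : Prop :=
  ∀ (S : ShortComplex C), S.ShortExact → 𝒜 S.X₂ → 𝒜 S.X₃ → 𝒜 S.X₁

/-- Axiom (PR2): every object of `C` admits an epimorphism from an object of `𝒜`. -/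
def PR2 (𝒜 : C → Prop) : Prop :=
  ∀ E : C, ∃ (A : C) (f : A ⟶ E), 𝒜 A ∧ Epi f

/-- A short exact sequence `0 → A → B → C → 0` in `C` with all terms in `𝒜` is an
`𝒜`-conflation if for every morphism `h : D ⟶ C` with `D ∈ 𝒜`, the pullback of the
epimorphism along `h` lies in `𝒜`. -/
def IsAConflation (𝒜 : C → Prop) (S : ShortComplex C) : Prop :=
  S.ShortExact ∧ 𝒜 S.X₁ ∧ 𝒜 S.X₂ ∧ 𝒜 S.X₃ ∧
    ∀ (D : C) (h : D ⟶ S.X₃), 𝒜 D → 𝒜 (pullback S.g h)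

/-- Axiom (C2'): every short exact sequence `0 → X → Y → C → 0` with `C ∈ 𝒜` receives a
morphism from an `𝒜`-conflation `0 → A → B → C → 0` over the identity of `C`. -/
def C2' (𝒜 : C → Prop) : Prop :=
  ∀ ⦃X Y Z : C⦄ (i : X ⟶ Y) (p : Y ⟶ Z) (w : i ≫ p = 0),
    (ShortComplex.mk i p w).ShortExact → 𝒜 Z →
    ∃ (A B : C) (i' : A ⟶ B) (p' : B ⟶ Z) (w' : i' ≫ p' = 0)
      (a : A ⟶ X) (b : B ⟶ Y),
      IsAConflation 𝒜 (ShortComplex.mk i' p' w') ∧ i' ≫ b = a ≫ i ∧ b ≫ p = p'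

/-- The relative weak idempotent completion of `𝒜` in `C`: all objects isomorphic to a
kernel of a retraction `r : A ⟶ B` (admitting a section `s` with `s ≫ r = 𝟙 B`) between
objects of `𝒜`. -/
def RelWeakIdemCompletion (𝒜 : C → Prop) (X : C) : Prop :=
  ∃ (A B : C) (r : A ⟶ B) (s : B ⟶ A),
    𝒜 A ∧ 𝒜 B ∧ s ≫ r = 𝟙 B ∧ Nonempty (X ≅ kernel r)

/-!
An object `X` lies in the completion iff `X ⊞ B ∈ 𝒜` for some `B ∈ 𝒜`. Adding a split sequence
`0 → B₁ → B₁ ⊞ B₂ → B₂ → 0` to `0 → X → Y → Z → 0` therefore makes the last two terms lie in `𝒜`.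
In that case (C2') provides a conflation `p : B ⟶ Z` factoring through `g : Y ⟶ Z`, so the
projection `pullback p g ⟶ B` has a section; it is a retraction in `𝒜` with the same kernel as `g`.
-/

section BiproductOfShortExact

variable {D : Type*} [Category* D] [Preadditive D] [HasBinaryBiproducts D] [Balanced D]
  [CategoryWithHomology D]

lemma shortExact_biprod_map {S T : ShortComplex D} (hS : S.ShortExact) (hT : T.ShortExact) :
    (ShortComplex.mk (biprod.map S.f T.f) (biprod.map S.g T.g)
      (by ext <;> simp)).ShortExact := by
  have := hS.mono_f
  have := hS.epi_g
  have := hT.mono_f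
  have := hT.epi_g
  refine .mk' (ShortComplex.exact_of_f_is_kernel _ (KernelFork.IsLimit.ofι' _ _ ?_))
    inferInstance inferInstance
  intro W k hk
  have hkS : (k ≫ biprod.fst) ≫ S.g = 0 := by simpa using hk =≫ biprod.fst
  have hkT : (k ≫ biprod.snd) ≫ T.g = 0 := by simpa using hk =≫ biprod.snd
  exact ⟨biprod.lift (hS.exact.lift _ hkS) (hT.exact.lift _ hkT), by ext <;> simp⟩

end BiproductOfShortExact

lemma relWeakIdemCompletion_iff_exists_iso_biprod {𝒜 : C → Prop} {X : C} :
    RelWeakIdemCompletion 𝒜 X ↔ ∃ A B : C, 𝒜 A ∧ 𝒜 B ∧ Nonempty (A ≅ X ⊞ B) := by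
  constructor
  · rintro ⟨A, B, r, s, hA, hB, hsr, ⟨e⟩⟩
    let S := ShortComplex.mk (kernel.ι r) r (kernel.condition r)
    have hS : S.Exact := S.exact_of_f_is_kernel (kernelIsKernel r)
    let σ : S.Splitting := .ofExactOfSection S hS s hsr inferInstance
    exact ⟨A, B, hA, hB, ⟨σ.isoBinaryBiproduct ≪≫ biprod.mapIso e.symm (Iso.refl B)⟩⟩
  · rintro ⟨A, B, hA, hB, ⟨e⟩⟩
    let kernelSndIso : X ≅ kernel (biprod.snd : X ⊞ B ⟶ B) :=
      (biprod.isKernelSndKernelFork X B).conePointUniqueUpToIso (limit.isLimit _)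
    exact ⟨A, B, e.hom ≫ biprod.snd, biprod.inr ≫ e.inv, hA, hB, by simp,
      ⟨kernelSndIso ≪≫ (kernelIsIsoComp e.hom biprod.snd).symm⟩⟩

lemma RelWeakIdemCompletion.of_biprod {𝒜 : C → Prop} (hadd : IsAdditiveClosed 𝒜) {X B : C}
    (hB : 𝒜 B) (h : RelWeakIdemCompletion 𝒜 (X ⊞ B)) : RelWeakIdemCompletion 𝒜 X := by
  obtain ⟨A, B', hA, hB', ⟨e⟩⟩ := relWeakIdemCompletion_iff_exists_iso_biprod.mp h
  exact relWeakIdemCompletion_iff_exists_iso_biprod.mpr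
    ⟨A, B ⊞ B', hA, hadd.biprod hB hB', ⟨e ≪≫ biprod.associator X B B'⟩⟩

lemma relWeakIdemCompletion_X₁_of_pullback {𝒜 : C → Prop} {S : ShortComplex C}
    (hS : S.ShortExact) {B : C} (b : B ⟶ S.X₂) (hB : 𝒜 B) (hP : 𝒜 (pullback (b ≫ S.g) S.g)) :
    RelWeakIdemCompletion 𝒜 S.X₁ := by
  have := isIso_kernel_map_of_isPullback (IsPullback.of_hasPullback (b ≫ S.g) S.g)
  let kernelFstIso : kernel (pullback.fst (b ≫ S.g) S.g) ≅ kernel S.g :=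
    asIso (kernel.map _ _ _ _ pullback.condition)
  let kernelIso : S.X₁ ≅ kernel S.g :=
    hS.fIsKernel.conePointUniqueUpToIso (limit.isLimit _)
  exact ⟨_, B, pullback.fst (b ≫ S.g) S.g, pullback.lift (𝟙 B) b (by simp), hP, hB,
    pullback.lift_fst _ _ _, ⟨kernelIso ≪≫ kernelFstIso.symm⟩⟩

lemma C2'.relWeakIdemCompletion_X₁ {𝒜 : C → Prop} (hC2 : C2' 𝒜) {S : ShortComplex C}
    (hS : S.ShortExact) (h₂ : 𝒜 S.X₂) (h₃ : 𝒜 S.X₃) : RelWeakIdemCompletion 𝒜 S.X₁ := by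
  obtain ⟨_, B, _, _, _, _, b, ⟨-, -, hB, -, hpullback⟩, -, rfl⟩ := hC2 S.f S.g S.zero hS h₃
  exact relWeakIdemCompletion_X₁_of_pullback hS b hB (hpullback S.X₂ S.g h₂)

/-- If `𝒜` satisfies (C2'), then the relative weak idempotent completion of `𝒜` in `C`
is deflation-closed in `C`. -/
theorem relWeakIdemCompletion_deflationClosed_of_C2'
    (𝒜 : C → Prop) (hadd : IsAdditiveClosed 𝒜) (hC2 : C2' 𝒜) :
    DeflationClosed (RelWeakIdemCompletion 𝒜) := by
  intro S hS h₂ h₃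
  obtain ⟨Y', B₁, hY', hB₁, ⟨eY⟩⟩ := relWeakIdemCompletion_iff_exists_iso_biprod.mp h₂
  obtain ⟨Z', B₂, hZ', hB₂, ⟨eZ⟩⟩ := relWeakIdemCompletion_iff_exists_iso_biprod.mp h₃
  have hsum := shortExact_biprod_map hS
    (ShortComplex.Splitting.ofHasBinaryBiproduct B₁ B₂).shortExact
  have hY : 𝒜 (S.X₂ ⊞ (B₁ ⊞ B₂)) :=
    hadd.iso (biprod.mapIso eY (Iso.refl B₂) ≪≫ biprod.associator _ _ _) (hadd.biprod hY' hB₂)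
  have hZ : 𝒜 (S.X₃ ⊞ B₂) := hadd.iso eZ hZ'
  exact (hC2.relWeakIdemCompletion_X₁ hsum hY hZ).of_biprod hadd hB₁
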